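/- arXiv:1809.02720 — 2 statements merged into one kernel-verified Lean document; each statement's English description precedes it below -/
import Mathlib

section
/- Let α > 0 be irrational and set C = ℕ ∪ { −α·m : m ∈ ℕ } ⊆ ℝ. Then: (i) for every a > 0, the set C ∩ [−a, a] is finite, and in particular dim_B^-(C ∩ [−a,a]) = 0 for all a > 0; but (ii) the Minkowski sum C + C does not have zero lower box-counting dimension; in fact dim_B^-((C + C) ∩ [0,1]) = 1. -/
open Set Filter Pointwise

/-- `coverN ε S` is the minimal number of intervals of length `ε` needed to cover `S`. -/
noncomputable def coverN (ε : ℝ) (S : Set ℝ) : ℕ :=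
  sInf {n : ℕ | ∃ f : Fin n → ℝ, S ⊆ ⋃ i, Icc (f i) (f i + ε)}

/-- The lower box-counting dimension of a set `S ⊆ ℝ`. -/
noncomputable def lowerBoxDim (S : Set ℝ) : ℝ :=
  liminf (fun ε : ℝ => Real.log (coverN ε S) / Real.log ε⁻¹) (nhdsWithin 0 (Ioi 0))

theorem coverN_le {ε : ℝ} {S : Set ℝ} {n : ℕ}
    (h : ∃ f : Fin n → ℝ, S ⊆ ⋃ i, Icc (f i) (f i + ε)) : coverN ε S ≤ n :=
  Nat.sInf_le h

theorem coverN_finite_le {ε : ℝ} (hε : 0 < ε) {S : Set ℝ} (hS : S.Finite) :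
    coverN ε S ≤ hS.toFinset.card := by
  apply coverN_le
  refine ⟨fun i => (hS.toFinset.equivFin.symm i : ℝ), ?_⟩
  intro x hx
  rw [mem_iUnion]
  refine ⟨hS.toFinset.equivFin ⟨x, by simpa using hx⟩, ?_⟩
  simp [hε.le]

theorem coverN_unit_le {ε : ℝ} (hε : 0 < ε) {S : Set ℝ} (hS : S ⊆ Icc 0 1) :
    coverN ε S ≤ ⌊1 / ε⌋₊ + 1 := by
  apply coverN_le
  refine ⟨fun i => (i : ℕ) * ε, ?_⟩
  intro x hx
  obtain ⟨h0, h1⟩ := hS hx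
  rw [mem_iUnion]
  refine ⟨⟨⌊x / ε⌋₊, ?_⟩, ?_⟩
  · exact Nat.lt_succ_of_le (Nat.floor_mono (by gcongr))
  · have a1 := Nat.floor_le (div_nonneg h0 hε.le)
    have a2 := Nat.lt_floor_add_one (x / ε)
    rw [le_div_iff₀ hε] at a1
    rw [div_lt_iff₀ hε] at a2
    constructor
    · exact a1
    · show x ≤ (⌊x / ε⌋₊ : ℝ) * ε + ε
      linarith

theorem le_coverN {ε : ℝ} (hε : 0 < ε) {S : Set ℝ} (hS : S ⊆ Icc 0 1)
    (hd : Icc 0 1 ⊆ closure S) : 1 / ε ≤ coverN ε S := by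
  have hne : {n : ℕ | ∃ f : Fin n → ℝ, S ⊆ ⋃ i, Icc (f i) (f i + ε)}.Nonempty := by
    refine ⟨⌊1 / ε⌋₊ + 1, fun i => (i : ℕ) * ε, ?_⟩
    intro x hx
    obtain ⟨h0, h1⟩ := hS hx
    rw [mem_iUnion]
    refine ⟨⟨⌊x / ε⌋₊, ?_⟩, ?_⟩
    · exact Nat.lt_succ_of_le (Nat.floor_mono (by gcongr))
    · have a1 := Nat.floor_le (div_nonneg h0 hε.le)
      have a2 := Nat.lt_floor_add_one (x / ε)
      rw [le_div_iff₀ hε] at a1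
      rw [div_lt_iff₀ hε] at a2
      constructor
      · exact a1
      · show x ≤ (⌊x / ε⌋₊ : ℝ) * ε + ε
        linarith
  obtain ⟨f, hf⟩ := Nat.sInf_mem hne
  change S ⊆ ⋃ i : Fin (coverN ε S), Icc (f i) (f i + ε) at hf
  have hcl : IsClosed (⋃ i : Fin (coverN ε S), Icc (f i) (f i + ε)) :=
    isClosed_iUnion_of_finite fun i => isClosed_Icc
  have h2 := hd.trans (closure_minimal hf hcl)
  have h3 := (MeasureTheory.measure_mono (μ := MeasureTheory.volume) h2).trans
    (MeasureTheory.measure_iUnion_fintype_le _ _)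
  simp only [Real.volume_Icc, add_sub_cancel_left, sub_zero, Finset.sum_const,
    Finset.card_univ, Fintype.card_fin] at h3
  rw [← ENNReal.ofReal_nsmul, ENNReal.ofReal_le_ofReal_iff (by positivity)] at h3
  rw [div_le_iff₀ hε]
  simpa using h3

theorem tendsto_loginv : Tendsto (fun ε : ℝ => Real.log ε⁻¹) (nhdsWithin 0 (Ioi 0)) atTop :=
  Real.tendsto_log_atTop.comp tendsto_inv_nhdsGT_zero

theorem lowerBoxDim_finite {S : Set ℝ} (hS : S.Finite) : lowerBoxDim S = 0 := by
  apply Tendsto.liminf_eq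
  have h1 : Tendsto (fun ε : ℝ => Real.log (hS.toFinset.card) / Real.log ε⁻¹)
      (nhdsWithin 0 (Ioi 0)) (nhds 0) := tendsto_const_nhds.div_atTop tendsto_loginv
  refine tendsto_of_tendsto_of_tendsto_of_le_of_le' tendsto_const_nhds h1 ?_ ?_
  · filter_upwards [tendsto_loginv.eventually_gt_atTop 0] with ε h
    exact div_nonneg (Real.log_natCast_nonneg _) h.le
  · filter_upwards [tendsto_loginv.eventually_gt_atTop 0, self_mem_nhdsWithin] with ε h h0
    have h0 : 0 < ε := h0
    have := coverN_finite_le h0 hS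
    gcongr ?_ / _
    rcases Nat.eq_zero_or_pos (coverN ε S) with h' | h'
    · rw [h']; simpa using Real.log_natCast_nonneg _
    · exact Real.log_le_log (by exact_mod_cast h') (by exact_mod_cast this)

theorem lowerBoxDim_dense {S : Set ℝ} (hS : S ⊆ Icc 0 1)
    (hd : Icc 0 1 ⊆ closure S) : lowerBoxDim S = 1 := by
  apply Tendsto.liminf_eq
  have h1 : Tendsto (fun ε : ℝ => Real.log 2 / Real.log ε⁻¹ + 1)
      (nhdsWithin 0 (Ioi 0)) (nhds 1) := by
    simpa using (tendsto_const_nhds.div_atTop tendsto_loginv).add_const 1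
  refine tendsto_of_tendsto_of_tendsto_of_le_of_le' tendsto_const_nhds h1 ?_ ?_
  · filter_upwards [tendsto_loginv.eventually_gt_atTop 0, self_mem_nhdsWithin] with ε h h0
    have h0 : 0 < ε := h0
    have := le_coverN h0 hS hd
    rw [le_div_iff₀ h, one_mul]
    apply Real.log_le_log (by positivity)
    simpa using this
  · filter_upwards [tendsto_loginv.eventually_gt_atTop 0, self_mem_nhdsWithin] with ε h h0
    have h0 : 0 < ε := h0
    have h2 := le_coverN h0 hS hd
    have h3 := coverN_unit_le h0 hS
    have h4 : 1 < ε⁻¹ := by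
      by_contra! hc
      exact absurd h (not_lt.2 (Real.log_nonpos (by positivity) hc))
    have h5 : (coverN ε S : ℝ) ≤ 2 * ε⁻¹ := by
      have a1 := Nat.floor_le (show 0 ≤ 1 / ε by positivity)
      have a2 : (coverN ε S : ℝ) ≤ ⌊1 / ε⌋₊ + 1 := by exact_mod_cast h3
      rw [one_div] at a1 a2
      linarith
    have h6 : (0 : ℝ) < coverN ε S := lt_of_lt_of_le (by positivity) h2
    have h7 := Real.log_le_log h6 h5
    rw [Real.log_mul (by norm_num) (by positivity)] at h7
    rw [div_le_iff₀ h, add_mul, div_mul_cancel₀ _ h.ne', one_mul]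
    exact h7

theorem exists_small (α : ℝ) (hα : Irrational α) {δ : ℝ} (hδ : 0 < δ) :
    ∃ p q : ℤ, 0 < (p : ℝ) - α * q ∧ (p : ℝ) - α * q < δ := by
  have h : Dense (AddSubgroup.closure {α, 1} : Set ℝ) :=
    dense_addSubgroupClosure_pair_iff.2 (by simpa using hα)
  obtain ⟨y, hy, h1, h2⟩ := h.exists_between hδ
  obtain ⟨m, n, rfl⟩ := AddSubgroup.mem_closure_pair.1 hy
  simp only [zsmul_eq_mul, mul_one] at h1 h2
  refine ⟨n, -m, ?_, ?_⟩ <;> push_cast <;> linarith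

theorem dense_aux (α : ℝ) (hα : Irrational α) {δ x : ℝ} (hδ : 0 < δ) (hx : x ∈ Icc (0 : ℝ) 1) :
    ∃ (n : ℤ) (m : ℤ), 0 ≤ m ∧ (n : ℝ) - α * m ∈ Icc (0 : ℝ) 1 ∧ |(n : ℝ) - α * m - x| < δ := by
  obtain ⟨p, q, h1, h2⟩ := exists_small α hα hδ
  obtain ⟨hx0, hx1⟩ := hx
  have key : ∀ z : ℝ, 0 ≤ z → ∃ k : ℕ, k * ((p : ℝ) - α * q) ≤ z ∧
      z < k * ((p : ℝ) - α * q) + ((p : ℝ) - α * q) ∧ 0 ≤ k * ((p : ℝ) - α * q) := by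
    intro z hz
    refine ⟨⌊z / ((p : ℝ) - α * q)⌋₊, ?_, ?_, by positivity⟩
    · rw [← le_div_iff₀ h1]; exact Nat.floor_le (by positivity)
    · have := Nat.lt_floor_add_one (z / ((p : ℝ) - α * q))
      rw [div_lt_iff₀ h1] at this
      linarith
  rcases le_total 0 q with hq | hq
  · obtain ⟨k, a, b, c⟩ := key x hx0
    have e : ((k * p : ℤ) : ℝ) - α * ((k * q : ℤ) : ℝ) = k * ((p : ℝ) - α * q) := by
      push_cast; ring
    refine ⟨k * p, k * q, by positivity, ?_, ?_⟩
    · rw [e]; exact ⟨c, a.trans hx1⟩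
    · rw [e, abs_lt]; constructor <;> linarith
  · obtain ⟨k, a, b, c⟩ := key (1 - x) (by linarith)
    have e : ((1 - k * p : ℤ) : ℝ) - α * ((k * (-q) : ℤ) : ℝ)
        = 1 - k * ((p : ℝ) - α * q) := by
      push_cast; ring
    refine ⟨1 - k * p, k * (-q), mul_nonneg (by positivity) (by linarith), ?_, ?_⟩
    · rw [e]; constructor <;> linarith
    · rw [e, abs_lt]; constructor <;> linarith

theorem stmt10 (α : ℝ) (hα : Irrational α) (hpos : 0 < α)
    (C : Set ℝ) (hC : C = {x : ℝ | ∃ n : ℕ, x = (n : ℝ)} ∪ {x : ℝ | ∃ m : ℕ, x = -α * (m : ℝ)}) :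
    (∀ a : ℝ, 0 < a → (C ∩ Icc (-a) a).Finite) ∧
    (∀ a : ℝ, 0 < a → lowerBoxDim (C ∩ Icc (-a) a) = 0) ∧
    lowerBoxDim ((C + C) ∩ Icc 0 1) = 1 := by
  have hfin : ∀ a : ℝ, 0 < a → (C ∩ Icc (-a) a).Finite := by
    intro a ha
    have hf : (((fun n : ℕ => (n : ℝ)) '' Iic ⌊a⌋₊) ∪
        ((fun m : ℕ => -α * (m : ℝ)) '' Iic ⌊a / α⌋₊)).Finite :=
      ((finite_Iic _).image _).union ((finite_Iic _).image _)
    refine hf.subset ?_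
    rintro x ⟨hx, h1, h2⟩
    rw [hC] at hx
    rcases hx with ⟨n, rfl⟩ | ⟨m, rfl⟩
    · exact Or.inl ⟨n, Nat.le_floor h2, rfl⟩
    · refine Or.inr ⟨m, Nat.le_floor ?_, rfl⟩
      rw [le_div_iff₀ hpos]
      linarith
  refine ⟨hfin, fun a ha => lowerBoxDim_finite (hfin a ha), ?_⟩
  apply lowerBoxDim_dense inter_subset_right
  intro x hx
  rw [Metric.mem_closure_iff]
  intro δ hδ
  obtain ⟨n, m, hm, h1, h2⟩ := dense_aux α hα hδ hx
  refine ⟨(n : ℝ) - α * m, ⟨?_, h1⟩, by rwa [dist_comm, Real.dist_eq]⟩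
  have hn : 0 ≤ n := by
    have hm' : (0 : ℝ) ≤ m := by exact_mod_cast hm
    have : (0 : ℝ) ≤ n := by nlinarith [h1.1, mul_nonneg hpos.le hm']
    exact_mod_cast this
  lift n to ℕ using hn
  lift m to ℕ using hm
  rw [hC]
  refine ⟨(n : ℝ), Or.inl ⟨n, rfl⟩, -α * m, Or.inr ⟨m, rfl⟩, ?_⟩
  push_cast
  ring
end

section
/- Let H be a complex Hilbert space and let A, B be bounded self-adjoint operators on H. Then every point of the spectrum of A lies within distance ‖A − B‖ of the spectrum of B: for all z ∈ σ(A), dist(z, σ(B)) ≤ ‖A − B‖. -/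
theorem stmt13 (H : Type*) [NormedAddCommGroup H] [InnerProductSpace ℂ H]
    [CompleteSpace H] (A B : H →L[ℂ] H)
    (hA : IsSelfAdjoint A) (hB : IsSelfAdjoint B) :
    ∀ z ∈ spectrum ℂ A, Metric.infDist z (spectrum ℂ B) ≤ ‖A - B‖ := by
  intro z hz
  by_contra! hlt
  have hBn : IsStarNormal B := hB.isStarNormal
  set d := Metric.infDist z (spectrum ℂ B) with hd
  have hd0 : 0 < d := (norm_nonneg _).trans_lt hlt
  have hdist : ∀ x ∈ spectrum ℂ B, d ≤ ‖z - x‖ := fun x hx => by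
    rw [← dist_eq_norm]; exact Metric.infDist_le_dist_of_mem hx
  have hne : ∀ x ∈ spectrum ℂ B, z - x ≠ 0 := fun x hx =>
    norm_pos_iff.1 (hd0.trans_le (hdist x hx))
  have hc1 : ContinuousOn (fun x : ℂ => z - x) (spectrum ℂ B) := by fun_prop
  have hc2 : ContinuousOn (fun x : ℂ => (z - x)⁻¹) (spectrum ℂ B) := hc1.inv₀ hne
  have h1 : cfc (fun x : ℂ => z - x) B = algebraMap ℂ _ z - B := by
    rw [cfc_sub (fun _ : ℂ => z) (fun x : ℂ => x) B, cfc_const z B, cfc_id' ℂ B]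
  set R := cfc (fun x : ℂ => (z - x)⁻¹) B with hR
  have hRn : ‖R‖ ≤ d⁻¹ := by
    refine norm_cfc_le (by positivity) fun x hx => ?_
    rw [norm_inv]
    exact inv_anti₀ hd0 (hdist x hx)
  have e1 : (algebraMap ℂ _ z - B) * R = 1 := by
    rw [← h1, hR, ← cfc_mul _ _ B hc1 hc2, ← cfc_const_one ℂ B]
    exact cfc_congr fun x hx => mul_inv_cancel₀ (hne x hx)
  have e2 : R * (algebraMap ℂ _ z - B) = 1 := by
    rw [← h1, hR, ← cfc_mul _ _ B hc2 hc1, ← cfc_const_one ℂ B]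
    exact cfc_congr fun x hx => inv_mul_cancel₀ (hne x hx)
  have hu : IsUnit (algebraMap ℂ (H →L[ℂ] H) z - B) := ⟨⟨_, R, e1, e2⟩, rfl⟩
  have hs : ‖R * (A - B)‖ < 1 := by
    calc ‖R * (A - B)‖ ≤ ‖R‖ * ‖A - B‖ := norm_mul_le _ _
      _ ≤ d⁻¹ * ‖A - B‖ := by gcongr
      _ < d⁻¹ * d := by gcongr
      _ = 1 := inv_mul_cancel₀ hd0.ne'
  have hu2 := hu.mul (isUnit_one_sub_of_norm_lt_one hs)
  rw [mul_sub, mul_one, ← mul_assoc, e1, one_mul, sub_sub, add_sub_cancel] at hu2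
  exact hz hu2
end
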